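/- Let n ≥ 2 and 0 ≤ k ≤ n−1. For every polynomial f ∈ MvPolynomial (Fin n × Fin n) ℂ, if f vanishes at every Hermitian matrix A ∈ Matrix (Fin n) (Fin n) ℂ that is k-degenerate, then f vanishes at every k-degenerate matrix A ∈ Matrix (Fin n) (Fin n) ℂ. (I.e., the Zariski closure in ℂ^{n×n} of the set of k-degenerate Hermitian matrices is the set of all k-degenerate complex matrices.) -/

import Mathlib

open Polynomial

def RatAt (g : ℂ → ℂ) : Prop :=
  ∃ p q : ℂ[X], q.eval Complex.I ≠ 0 ∧ ∀ t, q.eval t ≠ 0 → g t = p.eval t / q.eval t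

namespace RatAt

lemma const (c : ℂ) : RatAt (fun _ => c) := ⟨C c, 1, by simp, by simp⟩

lemma var : RatAt (fun t => t) := ⟨X, 1, by simp, by simp⟩

lemma add {g h : ℂ → ℂ} (hg : RatAt g) (hh : RatAt h) : RatAt (fun t => g t + h t) := by
  obtain ⟨p, q, hq, H⟩ := hg
  obtain ⟨p', q', hq', H'⟩ := hh
  refine ⟨p * q' + q * p', q * q', by simp [hq, hq'], fun t ht => ?_⟩
  simp only [eval_mul, ne_eq, mul_eq_zero, not_or] at ht
  beta_reduce
  rw [H t ht.1, H' t ht.2, div_add_div _ _ ht.1 ht.2]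
  simp

lemma mul {g h : ℂ → ℂ} (hg : RatAt g) (hh : RatAt h) : RatAt (fun t => g t * h t) := by
  obtain ⟨p, q, hq, H⟩ := hg
  obtain ⟨p', q', hq', H'⟩ := hh
  refine ⟨p * p', q * q', by simp [hq, hq'], fun t ht => ?_⟩
  simp only [eval_mul, ne_eq, mul_eq_zero, not_or] at ht
  beta_reduce
  rw [H t ht.1, H' t ht.2, div_mul_div_comm]
  simp

lemma inv {g : ℂ → ℂ} (hg : RatAt g) (h0 : g Complex.I ≠ 0) : RatAt (fun t => (g t)⁻¹) := by
  obtain ⟨p, q, hq, H⟩ := hg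
  have hp : p.eval Complex.I ≠ 0 := by
    intro h; apply h0; rw [H _ hq, h, zero_div]
  refine ⟨q * q, p * q, by simp [hq, hp], fun t ht => ?_⟩
  simp only [eval_mul, ne_eq, mul_eq_zero, not_or] at ht
  beta_reduce
  rw [H t ht.2, inv_div, eval_mul, eval_mul, mul_div_mul_right _ _ ht.2]

lemma sum {ι : Type*} (s : Finset ι) {g : ι → ℂ → ℂ} (hg : ∀ i, RatAt (g i)) :
    RatAt (fun t => ∑ i ∈ s, g i t) := by
  classical
  induction s using Finset.induction_on with
  | empty => simpa using const 0
  | insert a s ha ih => simpa [Finset.sum_insert ha] using (hg a).add ih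

lemma prod {ι : Type*} (s : Finset ι) {g : ι → ℂ → ℂ} (hg : ∀ i, RatAt (g i)) :
    RatAt (fun t => ∏ i ∈ s, g i t) := by
  classical
  induction s using Finset.induction_on with
  | empty => simpa using const 1
  | insert a s ha ih => simpa [Finset.prod_insert ha] using (hg a).mul ih

lemma vanish {g : ℂ → ℂ} (hg : RatAt g) (S : Set ℂ) (hS : S.Infinite) (h : ∀ t ∈ S, g t = 0) :
    g Complex.I = 0 := by
  obtain ⟨p, q, hq, H⟩ := hg
  have hpq : p * q = 0 := by
    apply Polynomial.eq_zero_of_infinite_isRoot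
    refine hS.mono fun t ht => ?_
    by_cases h0 : q.eval t = 0
    · simp [h0]
    · have := H t h0
      rw [h t ht, eq_comm, div_eq_zero_iff] at this
      rcases this with h1 | h1
      · simp [h1]
      · exact absurd h1 h0
  have hq0 : q ≠ 0 := by rintro rfl; simp at hq
  have hp : p = 0 := by simpa [hq0] using hpq
  rw [H _ hq, hp]; simp

end RatAt

def RatM {n : ℕ} (F : ℂ → Matrix (Fin n) (Fin n) ℂ) : Prop := ∀ i j, RatAt (fun t => F t i j)

namespace RatM
variable {n : ℕ} {F G : ℂ → Matrix (Fin n) (Fin n) ℂ}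

lemma const (A : Matrix (Fin n) (Fin n) ℂ) : RatM (fun _ => A) := fun _ _ => RatAt.const _

lemma add (hF : RatM F) (hG : RatM G) : RatM (fun t => F t + G t) :=
  fun i j => (hF i j).add (hG i j)

lemma smul {g : ℂ → ℂ} (hg : RatAt g) (hG : RatM G) : RatM (fun t => g t • G t) :=
  fun i j => hg.mul (hG i j)

lemma sub (hF : RatM F) (hG : RatM G) : RatM (fun t => F t - G t) := by
  have := hF.add (smul (RatAt.const (-1)) hG)
  simpa [sub_eq_add_neg] using this

lemma mul (hF : RatM F) (hG : RatM G) : RatM (fun t => F t * G t) := by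
  intro i j
  simp only [Matrix.mul_apply]
  exact RatAt.sum _ fun k => (hF i k).mul (hG k j)

lemma det (hF : RatM F) : RatAt (fun t => (F t).det) := by
  simp only [Matrix.det_apply']
  exact RatAt.sum _ fun s => (RatAt.const _).mul (RatAt.prod _ fun i => hF _ _)

lemma inv (hF : RatM F) (h0 : (F Complex.I).det ≠ 0) : RatM (fun t => (F t)⁻¹) := by
  simp only [Matrix.inv_def, Ring.inverse_eq_inv']
  refine smul (hF.det.inv h0) ?_
  intro i j
  simp only [Matrix.adjugate_apply]
  refine det ?_
  intro a b
  by_cases h : a = j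
  · subst h; simpa using RatAt.const _
  · simpa [Matrix.updateRow_ne h] using hF a b

lemma eval (hF : RatM F) (f : MvPolynomial (Fin n × Fin n) ℂ) :
    RatAt (fun t => MvPolynomial.eval (fun p => F t p.1 p.2) f) := by
  induction f using MvPolynomial.induction_on with
  | C a => simpa using RatAt.const a
  | add p q hp hq => simpa using hp.add hq
  | mul_X p i hp => simpa using hp.mul (hF i.1 i.2)

end RatM

lemma degen_iff {n m : ℕ} (A : Matrix (Fin n) (Fin n) ℂ) :
    ¬ LinearIndependent ℂ (fun r : Fin (m + 1) => A ^ (r : ℕ)) ↔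
      ∃ p : ℂ[X], p ≠ 0 ∧ p.natDegree ≤ m ∧ aeval A p = 0 := by
  rw [Fintype.not_linearIndependent_iff]
  constructor
  · rintro ⟨g, hg, i, hi⟩
    refine ⟨∑ r : Fin (m+1), C (g r) * X ^ (r : ℕ), ?_, ?_, ?_⟩
    · intro h
      apply hi
      have := congrArg (fun p => p.coeff (i : ℕ)) h
      simpa [finsetSum_coeff, coeff_C_mul, coeff_X_pow, Fin.val_inj] using this
    · apply natDegree_sum_le_of_forall_le
      intro r _
      exact (natDegree_C_mul_X_pow_le _ _).trans (by omega)
    · simpa [Algebra.smul_def] using hg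
  · rintro ⟨p, hp, hd, h⟩
    refine ⟨fun r => p.coeff r, ?_, ⟨p.natDegree, by omega⟩, by simpa using hp⟩
    rw [aeval_eq_sum_range' (n := m + 1) (by omega), Finset.sum_range] at h
    exact h

open Matrix in
lemma aeval_conj {n : ℕ} (P Q : Matrix (Fin n) (Fin n) ℂ) (hPQ : Q * P = 1) (hQP : P * Q = 1) (d : Fin n → ℂ)
    (p : ℂ[X]) : aeval (P * diagonal d * Q) p = P * diagonal (fun i => p.eval (d i)) * Q := by
  induction p using Polynomial.induction_on with
  | C a =>
    have : (diagonal fun _ : Fin n => a) = a • (1 : Matrix (Fin n) (Fin n) ℂ) := by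
      rw [smul_one_eq_diagonal]
    simp [this, hQP, Algebra.algebraMap_eq_smul_one]
  | add p q hp hq =>
    simp only [map_add, hp, hq, eval_add, ← mul_add, ← add_mul, diagonal_add]
  | monomial k a h =>
    rw [pow_succ, ← mul_assoc, map_mul, h, aeval_X]
    have : P * diagonal (fun i => eval (d i) (C a * X ^ k)) * Q * (P * diagonal d * Q)
      = P * diagonal (fun i => eval (d i) (C a * X ^ k)) * (Q * P) * diagonal d * Q := by
      simp only [mul_assoc]
    rw [this, hPQ, mul_one, mul_assoc P, diagonal_mul_diagonal]
    simp [mul_assoc]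

open Matrix in
/-- The diagonalizable case, for a Cayley transform. -/
lemma cayley_case {n m : ℕ} (hm : 1 ≤ m) (f : MvPolynomial (Fin n × Fin n) ℂ)
    (hvan : ∀ A : Matrix (Fin n) (Fin n) ℂ, A.IsHermitian →
      (∃ p : ℂ[X], p ≠ 0 ∧ p.natDegree ≤ m ∧ aeval A p = 0) →
      MvPolynomial.eval (fun p => A p.1 p.2) f = 0)
    (M : Matrix (Fin n) (Fin n) ℂ) (h1 : (1 - M).det ≠ 0) (h2 : (1 + M).det ≠ 0)
    (l : ℕ → ℂ) (c : Fin n → ℕ) (hc : ∀ i, c i < m) :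
    MvPolynomial.eval (fun p => ((1 + M) * (1 - M)⁻¹ * diagonal (fun i => l (c i)) *
      ((1 + M)⁻¹ * (1 - M))) p.1 p.2) f = 0 := by
  set K : Matrix (Fin n) (Fin n) ℂ := (1/2 : ℂ) • (M - Mᴴ) with hK
  set L : Matrix (Fin n) (Fin n) ℂ := (1/2 : ℂ) • (M + Mᴴ) with hL
  set N : ℂ → Matrix (Fin n) (Fin n) ℂ := fun t => K + (-Complex.I * t) • L with hN
  set e : ℂ → ℕ → ℂ := fun t i => (l i).re + t * (l i).im with he
  set F : ℂ → Matrix (Fin n) (Fin n) ℂ := fun t =>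
    (1 + N t) * (1 - N t)⁻¹ * diagonal (fun i => e t (c i)) * ((1 + N t)⁻¹ * (1 - N t)) with hF
  have hNI : N Complex.I = M := by
    simp only [hN, hK, hL]
    rw [neg_mul, Complex.I_mul_I, neg_neg, one_smul, ← smul_add]
    ext i j; simp; ring
  have heI : ∀ i, e Complex.I i = l i := by
    intro i
    simp only [he]
    rw [mul_comm]; exact Complex.re_add_im _
  have hNrat : RatM N := (RatM.const K).add (RatM.smul ((RatAt.const _).mul RatAt.var) (RatM.const L))
  have hD : RatM (fun t => diagonal (fun i => e t (c i))) := by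
    intro i j
    by_cases h : i = j
    · subst h
      simp only [diagonal_apply_eq]
      exact (RatAt.const _).add (RatAt.var.mul (RatAt.const _))
    · simpa [diagonal_apply_ne _ h] using RatAt.const 0
  have hp := (RatM.const 1).add hNrat
  have hs := (RatM.const 1).sub hNrat
  have hFrat : RatM F :=
    ((hp.mul (hs.inv (by simpa [hNI] using h1))).mul hD).mul
      ((hp.inv (by simpa [hNI] using h2)).mul hs)
  have key := (hFrat.eval f).vanish (Set.range (fun x : ℝ => (x : ℂ)))
    (Set.infinite_range_of_injective Complex.ofReal_injective) ?_
  · simpa only [hF, hNI, heI] using key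
  rintro _ ⟨t, rfl⟩
  have hNH : (N t)ᴴ = - N t := by
    simp only [hN, hK, hL, conjTranspose_add, conjTranspose_smul, conjTranspose_sub,
      conjTranspose_conjTranspose]
    ext i j
    simp
    ring
  have e1 : (1 + N t)ᴴ = 1 - N t := by simp [hNH, sub_eq_add_neg]
  have e2 : (1 - N t)ᴴ = 1 + N t := by simp [hNH]
  have hDH : (diagonal (fun i => e t (c i)))ᴴ = diagonal (fun i => e t (c i)) := by
    rw [diagonal_conjTranspose]
    congr 1
    ext i
    simp [he]
  apply hvan
  · simp only [hF, Matrix.IsHermitian, conjTranspose_mul, conjTranspose_nonsing_inv, e1, e2, hDH,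
      mul_assoc]
  · by_cases hu : IsUnit (1 - N t).det
    · have hu' : IsUnit (1 + N t).det := by
        rw [← e2, det_conjTranspose]; exact hu.star
      have c1 : ((1 + N t)⁻¹ * (1 - N t)) * ((1 + N t) * (1 - N t)⁻¹) = 1 := by
        have : (1 - N t) * (1 + N t) = (1 + N t) * (1 - N t) := by noncomm_ring
        calc _ = (1 + N t)⁻¹ * ((1 - N t) * (1 + N t)) * (1 - N t)⁻¹ := by simp only [mul_assoc]
          _ = ((1 + N t)⁻¹ * (1 + N t)) * ((1 - N t) * (1 - N t)⁻¹) := by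
            rw [this]; simp only [mul_assoc]
          _ = 1 := by rw [nonsing_inv_mul _ hu', mul_nonsing_inv _ hu, mul_one]
      refine ⟨∏ i ∈ Finset.range m, (X - C (e t i)), ?_, ?_, ?_⟩
      · exact (monic_prod_of_monic _ _ fun i _ => monic_X_sub_C _).ne_zero
      · rw [natDegree_prod_of_monic _ _ (fun i _ => monic_X_sub_C (e t i))]; simp
      · simp only [hF]
        rw [aeval_conj _ _ c1 (mul_eq_one_comm.mp c1)]
        have : (fun i => eval (e t (c i)) (∏ i ∈ Finset.range m, (X - C (e t i)))) = 0 := by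
          ext i
          rw [eval_prod]
          exact Finset.prod_eq_zero (Finset.mem_range.mpr (hc i)) (by simp)
        rw [this]
        simp
    · refine ⟨X, X_ne_zero, by simpa using hm, ?_⟩
      simp [hF, nonsing_inv_apply_not_isUnit _ hu]

open Matrix in
lemma diag_case {n m : ℕ} (hm : 1 ≤ m) (f : MvPolynomial (Fin n × Fin n) ℂ)
    (hvan : ∀ A : Matrix (Fin n) (Fin n) ℂ, A.IsHermitian →
      (∃ p : ℂ[X], p ≠ 0 ∧ p.natDegree ≤ m ∧ aeval A p = 0) →
      MvPolynomial.eval (fun p => A p.1 p.2) f = 0)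
    (P : Matrix (Fin n) (Fin n) ℂ) (hP : P.det ≠ 0)
    (l : ℕ → ℂ) (c : Fin n → ℕ) (hc : ∀ i, c i < m) (A : Matrix (Fin n) (Fin n) ℂ)
    (hA : A * P = P * diagonal (fun i => l (c i))) :
    MvPolynomial.eval (fun p => A p.1 p.2) f = 0 := by
  -- rescale P so that 1 + P is invertible
  obtain ⟨μ, hμ⟩ := Infinite.exists_notMem_finset (insert 0 P.charpoly.roots.toFinset)
  simp only [Finset.mem_insert, Multiset.mem_toFinset, mem_roots P.charpoly_monic.ne_zero,
    not_or, IsRoot.def] at hμ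
  obtain ⟨hμ0, hμ1⟩ := hμ
  rw [eval_charpoly] at hμ1
  wlog hQ : (1 + P).det ≠ 0 generalizing P μ
  · refine this (-μ⁻¹ • P) ?_ ?_ (-1) (by simp) ?_ ?_
    · rw [det_smul]; exact mul_ne_zero (pow_ne_zero _ (by simpa using hμ0)) hP
    · rw [mul_smul_comm, hA, smul_mul_assoc]
    all_goals
    · have h : ∀ Q, Q = -μ⁻¹ • P → (1 + Q) = μ⁻¹ • (scalar (Fin n) μ - P) := by
        rintro _ rfl
        rw [smul_sub, scalar_apply, ← smul_one_eq_diagonal, smul_smul, inv_mul_cancel₀ hμ0, one_smul, sub_eq_add_neg,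
          neg_smul]
      have hh : (1 + (-μ⁻¹ • P)).det ≠ 0 := by
        rw [h _ rfl, det_smul]
        exact mul_ne_zero (pow_ne_zero _ (by simpa using hμ0)) hμ1
      first
      | exact hh
      | (have : scalar (Fin n) (-1 : ℂ) - (-μ⁻¹ • P) = (-1 : ℂ) • (1 + (-μ⁻¹ • P)) := by
          rw [scalar_apply, ← smul_one_eq_diagonal, smul_add, sub_eq_add_neg]; simp
         rw [this, det_smul]
         exact mul_ne_zero (pow_ne_zero _ (by simp)) hh)
  have uQ : IsUnit (1 + P).det := isUnit_iff_ne_zero.mpr hQ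
  have uP : IsUnit P.det := isUnit_iff_ne_zero.mpr hP
  set R := (1 + P)⁻¹ with hR
  have hRQ : R * (1 + P) = 1 := nonsing_inv_mul _ uQ
  have hQR : (1 + P) * R = 1 := mul_nonsing_inv _ uQ
  have dR : R.det ≠ 0 := by
    intro h
    have := congrArg det hRQ
    simp [h] at this
  have m1 : 1 - (P - 1) * R = (2 : ℂ) • R := by
    calc 1 - (P - 1) * R = (1 + P) * R - (P - 1) * R := by rw [hQR]
      _ = R + R := by noncomm_ring
      _ = _ := by rw [two_smul]
  have m2 : 1 + (P - 1) * R = (2 : ℂ) • (P * R) := by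
    calc 1 + (P - 1) * R = (1 + P) * R + (P - 1) * R := by rw [hQR]
      _ = P * R + P * R := by noncomm_ring
      _ = _ := by rw [two_smul]
  have hPP : P * P⁻¹ = 1 := mul_nonsing_inv _ uP
  have hPP' : P⁻¹ * P = 1 := nonsing_inv_mul _ uP
  have i1 : ((2 : ℂ) • R)⁻¹ = (1/2 : ℂ) • (1 + P) := by
    apply inv_eq_right_inv
    rw [smul_mul_smul_comm, hRQ]; norm_num
  have i2 : ((2 : ℂ) • (P * R))⁻¹ = (1/2 : ℂ) • ((1 + P) * P⁻¹) := by
    apply inv_eq_right_inv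
    rw [smul_mul_smul_comm]
    have : P * R * ((1 + P) * P⁻¹) = P * (R * (1 + P)) * P⁻¹ := by simp only [mul_assoc]
    rw [this, hRQ, mul_one, hPP]; norm_num
  have key := cayley_case hm f hvan ((P - 1) * R)
    (by rw [m1, det_smul]; exact mul_ne_zero (pow_ne_zero _ (by norm_num)) dR)
    (by rw [m2, det_smul, det_mul]
        exact mul_ne_zero (pow_ne_zero _ (by norm_num)) (mul_ne_zero hP dR)) l c hc
  rw [m1, m2, i1, i2, smul_mul_smul_comm, smul_mul_smul_comm, mul_assoc P R, hRQ] at key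
  have c1 : (1 + P) * P⁻¹ * R = P⁻¹ := by
    have : (1 + P) * P⁻¹ = P⁻¹ * (1 + P) := by rw [add_mul, mul_add, hPP, hPP']; simp
    rw [this, mul_assoc, hQR, mul_one]
  rw [c1, show (2 : ℂ) * (1/2) = 1 by norm_num, show (1/2 : ℂ) * 2 = 1 by norm_num, one_smul,
    one_smul, mul_one, ← hA, mul_assoc, hPP, mul_one] at key
  exact key

lemma exists_eigenbasis {n m : ℕ} (T : Module.End ℂ (Fin n → ℂ)) (l : ℕ → ℂ)
    (hl : ∀ i < m, ∀ j < m, l i = l j → i = j)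
    (hT : aeval T (∏ i ∈ Finset.range m, (X - C (l i))) = 0) :
    ∃ (b : Module.Basis (Fin n) ℂ (Fin n → ℂ)) (c : Fin n → ℕ), (∀ i, c i < m) ∧
      ∀ i, T (b i) = l (c i) • b i := by
  have hsep : (∏ i ∈ Finset.range m, (X - C (l i))).Separable := by
    rw [separable_prod_X_sub_C_iff']
    intro x hx y hy h
    exact hl x (by simpa using hx) y (by simpa using hy) h
  have hss : T.IsSemisimple :=
    Module.End.isSemisimple_of_squarefree_aeval_eq_zero hsep.squarefree hT
  have htop : ⨆ μ, T.eigenspace μ = ⊤ := by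
    rw [← Module.End.iSup_maxGenEigenspace_eq_top T]
    congr 1; ext1 μ
    exact (hss.isFinitelySemisimple.maxGenEigenspace_eq_eigenspace μ).symm
  set S : Set (Fin n → ℂ) := ⋃ μ, (T.eigenspace μ : Set (Fin n → ℂ)) with hS
  have hspan : Submodule.span ℂ S = ⊤ := by
    rw [hS, Submodule.span_iUnion, ← htop]
    simp
  obtain ⟨B, hBS, hBspan, hBli⟩ := exists_linearIndependent ℂ S
  let b0 : Module.Basis B ℂ (Fin n → ℂ) := Module.Basis.mk hBli (by simp [hBspan, hspan])
  have : Finite B := Module.Finite.finite_basis b0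
  have : Fintype B := Fintype.ofFinite B
  have hcard : Fintype.card B = Fintype.card (Fin n) := by
    rw [← Module.finrank_eq_card_basis b0]; simp
  let b := b0.reindex (Fintype.equivOfCardEq hcard)
  have hb : ∀ i, ∃ c : ℕ, c < m ∧ T (b i) = l c • b i := by
    intro i
    have hbS : b i ∈ S := by
      apply hBS
      simp [b, b0]
    obtain ⟨μ, hμ⟩ := Set.mem_iUnion.mp hbS
    have hev : T.HasEigenvector μ (b i) := ⟨hμ, b.ne_zero i⟩
    have h1 := Module.End.aeval_apply_of_hasEigenvector (p := ∏ i ∈ Finset.range m, (X - C (l i))) hev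
    rw [hT, LinearMap.zero_apply, eq_comm, smul_eq_zero, or_iff_left (b.ne_zero i), eval_prod,
      Finset.prod_eq_zero_iff] at h1
    obtain ⟨c, hc, h⟩ := h1
    refine ⟨c, by simpa using hc, ?_⟩
    rw [hev.apply_eq_smul]
    simp only [eval_sub, eval_X, eval_C, sub_eq_zero] at h
    rw [h]
  choose c hc hbc using hb
  exact ⟨b, c, hc, hbc⟩

lemma exists_dvd (m : ℕ) : ∀ p : ℂ[X], p ≠ 0 → p.natDegree ≤ m →
    ∃ a : ℕ → ℂ, p ∣ ∏ i ∈ Finset.range m, (X - C (a i)) := by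
  induction m with
  | zero =>
    intro p hp hd
    refine ⟨0, ?_⟩
    rw [Nat.le_zero, natDegree_eq_zero] at hd
    obtain ⟨x, rfl⟩ := hd
    exact IsUnit.dvd (isUnit_C.mpr (isUnit_iff_ne_zero.mpr (by simpa using hp)))
  | succ m ih =>
    intro p hp hd
    by_cases h0 : p.degree = 0
    · exact ⟨0, IsUnit.dvd (isUnit_iff_degree_eq_zero.mpr h0)⟩
    · obtain ⟨r, hr⟩ := IsAlgClosed.exists_root p h0
      obtain ⟨q, rfl⟩ := dvd_iff_isRoot.mpr hr
      have hq : q ≠ 0 := right_ne_zero_of_mul hp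
      rw [natDegree_mul (X_sub_C_ne_zero r) hq, natDegree_X_sub_C] at hd
      obtain ⟨a, ha⟩ := ih q hq (by omega)
      refine ⟨Function.update a m r, ?_⟩
      rw [Finset.prod_range_succ, Function.update_self, mul_comm]
      refine mul_dvd_mul_right ?_ _
      convert ha using 1
      refine Finset.prod_congr rfl fun i hi => ?_
      rw [Function.update_of_ne (by simp at hi; omega)]

/-- Perturbation along a flag. -/
lemma exists_perturb {V : Type*} [AddCommGroup V] [Module ℂ V] (m : ℕ) (T : Module.End ℂ V)
    (a : ℕ → ℂ) (hT : aeval T (∏ i ∈ Finset.range m, (X - C (a i))) = 0) :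
    ∃ B : Module.End ℂ V, ∀ s : ℂ,
      aeval (T + s • B) (∏ i ∈ Finset.range m, (X - C (a i + s * (i + 1)))) = 0 := by
  set W : ℕ → Submodule ℂ V :=
    fun j => LinearMap.ker (aeval T (∏ i ∈ Finset.range j, (X - C (a i)))) with hW
  have hstep : ∀ j, ∀ v ∈ W (j + 1), T v - a j • v ∈ W j := by
    intro j v hv
    simp only [hW, LinearMap.mem_ker, Finset.prod_range_succ, map_mul, Module.End.mul_apply] at hv ⊢
    simpa [Algebra.algebraMap_eq_smul_one] using hv
  have hmono : Monotone W := by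
    refine monotone_nat_of_le_succ fun j v hv => ?_
    simp only [hW, LinearMap.mem_ker] at hv ⊢
    rw [Finset.prod_range_succ, mul_comm, map_mul, Module.End.mul_apply, hv, map_zero]
  have hE : ∀ j, ∃ E : Module.End ℂ V, (∀ v, E v ∈ W j) ∧ ∀ v ∈ W j, E v = v := by
    intro j
    obtain ⟨g, hg⟩ := LinearMap.exists_leftInverse_of_injective (W j).subtype (by simp)
    refine ⟨(W j).subtype ∘ₗ g, fun v => by simp, fun v hv => ?_⟩
    have := LinearMap.congr_fun hg ⟨v, hv⟩
    simp only [LinearMap.comp_apply, Submodule.subtype_apply, LinearMap.id_apply] at this ⊢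
    rw [this]
  choose E hE1 hE2 using hE
  refine ⟨∑ i ∈ Finset.range m, (1 - E i), fun s => ?_⟩
  set B := ∑ i ∈ Finset.range m, (1 - E i) with hB
  have hBstep : ∀ j < m, ∀ v ∈ W (j + 1), B v - ((j : ℂ) + 1) • v ∈ W j := by
    intro j hj v hv
    have h1 : ((j : ℂ) + 1) • v = ∑ i ∈ Finset.range m, if i < j + 1 then v else 0 := by
      rw [← Finset.sum_filter, Finset.sum_const]
      have : (Finset.range m).filter (· < j + 1) = Finset.range (j + 1) := by
        ext x; simp; omega
      rw [this, Finset.card_range, ← Nat.cast_smul_eq_nsmul ℂ]; simp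
    rw [h1, hB, LinearMap.sum_apply, ← Finset.sum_sub_distrib]
    refine Submodule.sum_mem _ fun i _ => ?_
    split_ifs with h
    · simpa using hmono (show i ≤ j by omega) (hE1 i v)
    · have := hE2 i v (hmono (show j + 1 ≤ i by omega) hv)
      simp [this]
  have hkill : ∀ j ≤ m, ∀ v ∈ W j,
      aeval (T + s • B) (∏ i ∈ Finset.range j, (X - C (a i + s * (i + 1)))) v = 0 := by
    intro j
    induction j with
    | zero => intro _ v hv; simpa [hW] using hv
    | succ j ih =>
      intro hj v hv
      rw [Finset.prod_range_succ, map_mul, Module.End.mul_apply]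
      apply ih (by omega)
      have h := (W j).add_mem (hstep j v hv) ((W j).smul_mem s (hBstep j (by omega) v hv))
      convert h using 1
      simp only [map_sub, aeval_X, aeval_C, Algebra.algebraMap_eq_smul_one, LinearMap.sub_apply,
        LinearMap.add_apply, LinearMap.smul_apply, Module.End.one_apply]
      module
  ext v
  exact hkill m le_rfl v (by simp [hW, hT])

lemma aeval_toLin' {n : ℕ} (A : Matrix (Fin n) (Fin n) ℂ) (p : ℂ[X]) :
    aeval (Matrix.toLin' A) p = Matrix.toLin' (aeval A p) := by
  have := Polynomial.aeval_algHom_apply (Matrix.toLinAlgEquiv' (R := ℂ) (n := Fin n)).toAlgHom A p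
  exact this

/-- The Zariski closure in `ℂ^{n×n}` of the set of `k`-degenerate Hermitian matrices
is the set of all `k`-degenerate complex matrices: any polynomial vanishing on all
`k`-degenerate Hermitian matrices vanishes on all `k`-degenerate complex matrices. -/
theorem stmt_2 (n k : ℕ) (hn : 2 ≤ n) (hk : k ≤ n - 1)
    (f : MvPolynomial (Fin n × Fin n) ℂ)
    (hvan : ∀ A : Matrix (Fin n) (Fin n) ℂ, A.IsHermitian →
      ¬ LinearIndependent ℂ (fun r : Fin (n - k + 1) => A ^ (r : ℕ)) →
      MvPolynomial.eval (fun p => A p.1 p.2) f = 0) :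
    ∀ A : Matrix (Fin n) (Fin n) ℂ,
      ¬ LinearIndependent ℂ (fun r : Fin (n - k + 1) => A ^ (r : ℕ)) →
      MvPolynomial.eval (fun p => A p.1 p.2) f = 0 := by
  intro A hA
  have hm : 1 ≤ n - k := by omega
  generalize n - k = m at *
  simp only [degen_iff] at hvan hA
  obtain ⟨p, hp0, hpd, hpA⟩ := hA
  obtain ⟨a, q, hq⟩ := exists_dvd m p hp0 hpd
  obtain ⟨B, hB⟩ := exists_perturb m (Matrix.toLin' A) a (by
    rw [aeval_toLin', hq, map_mul, hpA, zero_mul, map_zero])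
  set B' := LinearMap.toMatrix' B with hB'
  have hFrat : RatM (fun t => A + (t + -Complex.I) • B') :=
    (RatM.const A).add (RatM.smul (RatAt.var.add (RatAt.const _)) (RatM.const B'))
  let bad : Finset ℂ := (Finset.range m ×ˢ Finset.range m).image
    fun x => (a x.1 - a x.2) / ((x.2 : ℂ) - x.1) + Complex.I
  have key := (hFrat.eval f).vanish ((bad : Set ℂ)ᶜ) (Set.Finite.infinite_compl bad.finite_toSet) ?_
  · simpa using key
  intro t ht
  set s := t + -Complex.I with hs
  obtain ⟨b, c, hc, hbc⟩ := exists_eigenbasis (m := m) (Matrix.toLin' A + s • B)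
    (fun i => a i + s * (i + 1)) (by
      intro i hi j hj h
      by_contra hij
      apply ht
      simp only [bad, Finset.coe_image, Set.mem_image]
      refine ⟨(i, j), by simp [hi, hj], ?_⟩
      have hne : (j : ℂ) - i ≠ 0 := by
        rw [sub_ne_zero]; exact_mod_cast Ne.symm hij
      simp only at h ⊢
      have : (a i - a j) / ((j : ℂ) - i) = s := by
        rw [div_eq_iff hne]; linear_combination h
      rw [this, hs]; ring) (hB s)
  let P : Matrix (Fin n) (Fin n) ℂ := Matrix.of fun i j => b j i
  have hP : IsUnit P := by
    rw [← Matrix.linearIndependent_cols_iff_isUnit]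
    exact b.linearIndependent
  refine diag_case hm f hvan P ((Matrix.isUnit_iff_isUnit_det _).mp hP).ne_zero
    (fun i => a i + s * (i + 1)) c hc _ ?_
  have hlin : Matrix.toLin' A + s • B = Matrix.toLin' (A + s • B') := by
    simp [hB']
  ext i j
  have h := congrFun (hbc j) i
  rw [hlin, Matrix.toLin'_apply] at h
  rw [Matrix.mul_diagonal, Matrix.mul_apply]
  simp only [Matrix.mulVec, dotProduct, Pi.smul_apply, smul_eq_mul] at h
  rw [mul_comm (P i j)]
  exact h
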